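/- Let s be an odd integer with 3 ≤ s ≤ n − 2 and let l ≥ 0 be an integer with s + l + 1 ≤ n, so that both C*_{s,l} and C*_{s,l+1} are defined and have order n. Then γ(C*_{s,l}) ≤ γ(C*_{s,l+1}). -/

import Mathlib

open scoped Classical

/-- `D` is a dominating set of `G`: every vertex not in `D` is adjacent to a vertex of `D`. -/
def IsDominatingSet {V : Type*} [Fintype V] (G : SimpleGraph V) (D : Finset V) : Prop :=
  ∀ v, v ∉ D → ∃ u ∈ D, G.Adj u v

/-- The domination number of `G`: minimum cardinality of a dominating set. -/
noncomputable def dominationNumber {V : Type*} [Fintype V] (G : SimpleGraph V) : ℕ :=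
  sInf {k | ∃ D : Finset V, IsDominatingSet G D ∧ D.card = k}

/-- Edge relation for the graph `C*_{s,l}` on vertex indices `0, …, n-1`:
vertices `0, …, s-1` form a cycle `C_s` (with `0` playing the role of `v_1`);
vertices `0, s, s+1, …, s+l-1` form a path of length `l` hanging at `0`;
and all remaining vertices `s+l, …, n-1` are pendant vertices attached to the
other end of the path (to `0` itself when `l = 0`). -/
def cstarRel (s l : ℕ) (a b : ℕ) : Prop :=
  (b = a + 1 ∧ a + 1 < s) ∨
  (a = 0 ∧ b = s - 1) ∨
  (1 ≤ l ∧ a = 0 ∧ b = s) ∨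
  (b = a + 1 ∧ s ≤ a ∧ a + 1 < s + l) ∨
  (a = (if l = 0 then 0 else s + l - 1) ∧ s + l ≤ b)

/-- The graph `C*_{s,l}` of order `n`: a cycle `C_s` with a path of length `l`
attached, and `n - s - l` pendant edges attached at the far end of the path. -/
def Cstar (n s l : ℕ) : SimpleGraph (Fin n) :=
  SimpleGraph.fromRel (fun i j => cstarRel s l i.val j.val)

/-!
Let `x` be the vertex of `C*_{s,l+1}` carrying the pendant vertices, and `e` its neighbour on the
path (or on the cycle, if `l = 0`), which carries the pendant vertices of `C*_{s,l}`. Collapse `x`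
and the pendant vertices onto `e`. The closed neighbourhood of `x` is sent to `e`, so the image of a
dominating set contains `e`, which in `C*_{s,l}` dominates itself, `x` and the pendant vertices.
Every other vertex is adjacent in both graphs to the same vertices, all fixed by the collapse.
-/

section Domination

variable {V W : Type*}

/-- The closed neighbourhood `N[v]` of `v` in `G`: the vertex `v` together with its neighbours.
A set is dominating when it meets every closed neighbourhood. -/
def closedNeighborSet (G : SimpleGraph V) (v : V) : Set V :=
  insert v (G.neighborSet v)

variable [Fintype V] [Fintype W] {G : SimpleGraph V} {H : SimpleGraph W}

theorem isDominatingSet_iff_exists_mem_closedNeighborSet {D : Finset V} :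
    IsDominatingSet G D ↔ ∀ v, ∃ u ∈ D, u ∈ closedNeighborSet G v := by
  refine forall_congr' fun v => ⟨fun h => ?_, ?_⟩
  · by_cases hv : v ∈ D
    · exact ⟨v, hv, Set.mem_insert v _⟩
    · obtain ⟨u, hu, huv⟩ := h hv
      exact ⟨u, hu, Or.inr huv.symm⟩
  · rintro ⟨u, hu, rfl | hvu⟩ hv
    · exact absurd hu hv
    · exact ⟨u, hu, hvu.symm⟩

theorem exists_isDominatingSet_card_eq (G : SimpleGraph V) :
    ∃ D : Finset V, IsDominatingSet G D ∧ D.card = dominationNumber G :=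
  Nat.sInf_mem (s := {k | ∃ D : Finset V, IsDominatingSet G D ∧ D.card = k})
    ⟨_, Finset.univ, fun v hv => absurd (Finset.mem_univ v) hv, rfl⟩

theorem IsDominatingSet.dominationNumber_le_card {D : Finset V} (hD : IsDominatingSet G D) :
    dominationNumber G ≤ D.card :=
  Nat.sInf_le ⟨D, hD, rfl⟩

theorem IsDominatingSet.image {D : Finset V} (hD : IsDominatingSet G D) {f : V → W}
    (hf : ∀ w, ∃ v, Set.MapsTo f (closedNeighborSet G v) (closedNeighborSet H w)) :
    IsDominatingSet H (D.image f) := by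
  refine isDominatingSet_iff_exists_mem_closedNeighborSet.mpr fun w => ?_
  obtain ⟨v, hv⟩ := hf w
  obtain ⟨u, hu, huv⟩ := isDominatingSet_iff_exists_mem_closedNeighborSet.mp hD v
  exact ⟨f u, Finset.mem_image_of_mem f hu, hv huv⟩

theorem dominationNumber_le_of_mapsTo {f : V → W}
    (hf : ∀ w, ∃ v, Set.MapsTo f (closedNeighborSet G v) (closedNeighborSet H w)) :
    dominationNumber H ≤ dominationNumber G := by
  obtain ⟨D, hD, hcard⟩ := exists_isDominatingSet_card_eq G
  calc dominationNumber H ≤ (D.image f).card := (hD.image hf).dominationNumber_le_card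
    _ ≤ D.card := Finset.card_image_le
    _ = dominationNumber G := hcard

end Domination

namespace Cstar

/-- The index of the vertex of `C*_{s,l}` that carries the pendant edges: the far end of the
attached path, which is the cycle vertex `0` when `l = 0`. -/
def pathEnd (s l : ℕ) : ℕ :=
  if l = 0 then 0 else s + l - 1

variable {n s l : ℕ} {e u v : Fin n}

theorem pathEnd_lt (hs : 0 < s) (l : ℕ) : pathEnd s l < s + l := by
  unfold pathEnd
  split_ifs <;> omega

theorem adj_of_eq_pathEnd (he : e.val = pathEnd s l) (hve : v ≠ e) (hv : s + l ≤ v) :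
    (Cstar n s l).Adj v e := by
  rw [Cstar, SimpleGraph.fromRel_adj]
  exact ⟨hve, Or.inr (Or.inr (Or.inr (Or.inr (Or.inr ⟨he, hv⟩))))⟩

theorem eq_pathEnd_of_adj_succ (hs : 0 < s) (hu : u < s + l) (hv : s + l ≤ v)
    (h : (Cstar n s (l + 1)).Adj v u) : u.val = pathEnd s l := by
  simp only [Cstar, SimpleGraph.fromRel_adj, cstarRel, Nat.succ_ne_zero, if_false] at h
  unfold pathEnd
  split_ifs <;> omega

theorem cstarRel_succ_iff {a b : ℕ} (ha : a < s + l) (hb : b < s + l) :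
    cstarRel s (l + 1) a b ↔ cstarRel s l a b := by
  have hb_far : ¬ s + l ≤ b := hb.not_ge
  have hb_far_succ : ¬ s + (l + 1) ≤ b := by omega
  simp only [cstarRel, hb_far, hb_far_succ, and_false, or_false]
  omega

theorem adj_succ_iff (hu : u < s + l) (hv : v < s + l) :
    (Cstar n s (l + 1)).Adj u v ↔ (Cstar n s l).Adj u v := by
  simp only [Cstar, SimpleGraph.fromRel_adj, cstarRel_succ_iff hu hv, cstarRel_succ_iff hv hu]

/-- The map collapsing the vertex of `C*_{s,l+1}` that carries the pendant edges, together with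
the pendant vertices, onto `e`; these are the vertices of index at least `s + l`. -/
def collapse (s l : ℕ) (e v : Fin n) : Fin n :=
  if v < s + l then v else e

theorem collapse_of_lt (hv : v < s + l) : collapse s l e v = v :=
  if_pos hv

theorem collapse_of_le (hv : s + l ≤ v) : collapse s l e v = e :=
  if_neg hv.not_gt

theorem mapsTo_collapse_singleton (hs : 0 < s) (he : e.val = pathEnd s l) (hv : s + l ≤ v) :
    Set.MapsTo (collapse s l e) (closedNeighborSet (Cstar n s (l + 1)) v) {e} := by
  rintro u (rfl | hvu)
  · exact collapse_of_le hv
  · rcases lt_or_ge u.val (s + l) with hu | hu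
    · have hue : u = e := Fin.ext ((eq_pathEnd_of_adj_succ hs hu hv hvu).trans he.symm)
      exact (collapse_of_lt hu).trans hue
    · exact collapse_of_le hu

theorem mapsTo_collapse_of_lt (hs : 0 < s) (he : e.val = pathEnd s l) (hv : v < s + l)
    (hve : v ≠ e) :
    Set.MapsTo (collapse s l e) (closedNeighborSet (Cstar n s (l + 1)) v)
      (closedNeighborSet (Cstar n s l) v) := by
  rintro u (rfl | hvu)
  · exact Or.inl (collapse_of_lt hv)
  · have hu : u < s + l := by
      by_contra! hu
      exact hve (Fin.ext ((eq_pathEnd_of_adj_succ hs hv hu hvu.symm).trans he.symm))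
    rw [collapse_of_lt hu]
    exact Or.inr ((adj_succ_iff hv hu).mp hvu)

theorem mem_closedNeighborSet_of_eq_pathEnd (he : e.val = pathEnd s l)
    (hv : v = e ∨ s + l ≤ v) : e ∈ closedNeighborSet (Cstar n s l) v := by
  by_cases hve : v = e
  · exact Or.inl hve.symm
  · exact Or.inr (adj_of_eq_pathEnd he hve (hv.resolve_left hve))

end Cstar

open Cstar in
theorem dominationNumber_Cstar_mono_general {n s l : ℕ} (hs : 0 < s) (hl : s + l < n) :
    dominationNumber (Cstar n s l) ≤ dominationNumber (Cstar n s (l + 1)) := by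
  obtain ⟨e, he⟩ : ∃ e : Fin n, e.val = pathEnd s l := ⟨⟨_, (pathEnd_lt hs l).trans hl⟩, rfl⟩
  refine dominationNumber_le_of_mapsTo (f := collapse s l e) fun w => ?_
  by_cases hw : w = e ∨ s + l ≤ w
  · let x : Fin n := ⟨s + l, hl⟩
    have he_mem : e ∈ closedNeighborSet (Cstar n s l) w :=
      mem_closedNeighborSet_of_eq_pathEnd he hw
    exact ⟨x, (mapsTo_collapse_singleton hs he le_rfl).mono_right
      (Set.singleton_subset_iff.mpr he_mem)⟩
  · push Not at hw
    exact ⟨w, mapsTo_collapse_of_lt hs he hw.2 hw.1⟩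

/-- For odd `s` with `3 ≤ s ≤ n - 2` and `s + l + 1 ≤ n`, the domination number
of `C*_{s,l}` is at most that of `C*_{s,l+1}` (both of order `n`). -/
theorem dominationNumber_Cstar_mono
    (n s l : ℕ) (hodd : Odd s) (hs : 3 ≤ s) (hsn : s ≤ n - 2) (hl : s + l + 1 ≤ n) :
    dominationNumber (Cstar n s l) ≤ dominationNumber (Cstar n s (l + 1)) :=
  dominationNumber_Cstar_mono_general (by omega) hl
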